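/- Let X be an uncountable Polish space (a separable completely metrizable topological space). Then the quotient of the set of all closed subsets of X by the equivalence relation 'homeomorphic (with the subspace topologies)' has cardinality exactly 2^ℵ₀. -/

import Mathlib

open Metric Set
open scoped ENNReal NNReal

noncomputable section

/-- A metric space is doubling if there is `N` such that every closed ball of radius `r`
can be covered by at most `N` closed balls of radius `r / 2`. -/
def IsDoubling (X : Type*) [MetricSpace X] : Prop :=
  ∃ N : ℕ, ∀ (x : X) (r : ℝ), ∃ c : Finset X, c.card ≤ N ∧
    Metric.closedBall x r ⊆ ⋃ y ∈ c, Metric.closedBall y (r / 2)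

/-- Every `δ`-chain is trivial (constant). -/
def IsUniformlyDisconnectedWith (X : Type*) [MetricSpace X] (δ : ℝ) : Prop :=
  ∀ (N : ℕ) (x : ℕ → X),
    (∀ i : ℕ, 1 ≤ i → i ≤ N → dist (x (i - 1)) (x i) ≤ δ * dist (x 0) (x N)) →
    ∀ i ≤ N, x i = x 0

def IsUniformlyDisconnected (X : Type*) [MetricSpace X] : Prop :=
  ∃ δ : ℝ, 0 < δ ∧ δ < 1 ∧ IsUniformlyDisconnectedWith X δ

/-- `ρ`-uniform perfectness. -/
def IsUniformlyPerfectWith (X : Type*) [MetricSpace X] (ρ : ℝ) : Prop :=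
  ∀ (x : X) (r : ℝ), 0 < r → r < Metric.diam (Set.univ : Set X) →
    (Metric.closedBall x r \ Metric.ball x (ρ * r)).Nonempty

def IsUniformlyPerfect (X : Type*) [MetricSpace X] : Prop :=
  ∃ ρ : ℝ, 0 < ρ ∧ ρ ≤ 1 ∧ IsUniformlyPerfectWith X ρ

/-- A metric space has type `(u, v, w) ∈ {0,1}³` (here encoded by `Bool`s) if `u = 1` exactly
when it is doubling, `v = 1` exactly when it is uniformly disconnected, and `w = 1` exactly
when it is uniformly perfect. -/
def HasType (X : Type*) [MetricSpace X] (u v w : Bool) : Prop :=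
  (IsDoubling X ↔ u = true) ∧ (IsUniformlyDisconnected X ↔ v = true) ∧
    (IsUniformlyPerfect X ↔ w = true)

/-- `S_D`: points having no doubling neighborhood. -/
def SD (X : Type*) [MetricSpace X] : Set X :=
  {x : X | ∀ s ∈ nhds x, ¬ IsDoubling ↥s}

/-- `S_UD`: points having no uniformly disconnected neighborhood. -/
def SUD (X : Type*) [MetricSpace X] : Set X :=
  {x : X | ∀ s ∈ nhds x, ¬ IsUniformlyDisconnected ↥s}

/-- `S_UP`: points having no uniformly perfect neighborhood. -/
def SUP (X : Type*) [MetricSpace X] : Set X :=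
  {x : X | ∀ s ∈ nhds x, ¬ IsUniformlyPerfect ↥s}

/-- The ternary correspondence map `T(x) = Σ_{i≥1} 2 x_i / 3^i` (indices shifted to start
at `0`). -/
def cantorT (x : ℕ → Bool) : ℝ :=
  ∑' i : ℕ, 2 * (if x i then (1 : ℝ) else 0) / 3 ^ (i + 1)

/-- A Cantor space: a topological space homeomorphic to the middle-third Cantor set
(`cantorSet` is Mathlib's middle-third Cantor set in `ℝ`). -/
def IsCantorSpace (X : Type*) [TopologicalSpace X] : Prop :=
  Nonempty (X ≃ₜ ↥cantorSet)

/-- The first index at which `x` and `y` differ. -/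
def seqV (x y : ℕ → Bool) : ℕ := sInf {n | x n ≠ y n}

-- The standard ultrametric `e(x,y) = 3^{-(v(x,y)+1)}` on `2^ℕ` (indices starting at `0`,
-- corresponding to `3^{-min{n ≥ 1 : x_n ≠ y_n}}` with indices starting at `1`).
open Classical in
def cantorE (x y : ℕ → Bool) : ℝ :=
  if x = y then 0 else (3 : ℝ)⁻¹ ^ (seqV x y + 1)

/-- A shrinking sequence: positive, non-increasing, converging to `0`. -/
def IsShrinking (α : ℕ → ℝ) : Prop :=
  (∀ n, 0 < α n) ∧ (∀ m n : ℕ, m ≤ n → α n ≤ α m) ∧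
    Filter.Tendsto α Filter.atTop (nhds 0)

-- The distance `d_α(x,y) = α (v(x,y))` associated with a sequence `α`.
open Classical in
def seqDist (α : ℕ → ℝ) (x y : ℕ → Bool) : ℝ :=
  if x = y then 0 else α (seqV x y)

lemma seqV_comm (x y : ℕ → Bool) : seqV x y = seqV y x := by
  unfold seqV
  congr 1
  ext n
  exact ne_comm

lemma seqDist_self (α : ℕ → ℝ) (x : ℕ → Bool) : seqDist α x x = 0 := by
  rw [seqDist, if_pos rfl]

lemma seqDist_of_ne (α : ℕ → ℝ) {x y : ℕ → Bool} (h : x ≠ y) :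
    seqDist α x y = α (seqV x y) := by
  rw [seqDist, if_neg h]

lemma seqDist_nonneg {α : ℕ → ℝ} (hα : ∀ n, 0 < α n) (x y : ℕ → Bool) :
    0 ≤ seqDist α x y := by
  rcases eq_or_ne x y with h | h
  · rw [h, seqDist_self]
  · rw [seqDist_of_ne α h]
    exact (hα _).le

lemma min_seqV_le {x y z : ℕ → Bool} (hxz : x ≠ z) :
    min (seqV x y) (seqV y z) ≤ seqV x z := by
  have hne : {n | x n ≠ z n}.Nonempty := by
    rcases Function.ne_iff.mp hxz with ⟨n, hn⟩
    exact ⟨n, hn⟩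
  have hmem : x (seqV x z) ≠ z (seqV x z) := Nat.sInf_mem hne
  rcases ne_or_eq (x (seqV x z)) (y (seqV x z)) with h | h
  · exact le_trans (min_le_left _ _) (Nat.sInf_le h)
  · have h' : y (seqV x z) ≠ z (seqV x z) := by rw [← h]; exact hmem
    exact le_trans (min_le_right _ _) (Nat.sInf_le h')

/-- The sequentially metrized Cantor space `(2^ℕ, d_α)` for a shrinking sequence `α`. -/
def seqMetricSpace (α : ℕ → ℝ) (hα : IsShrinking α) : MetricSpace (ℕ → Bool) where
  dist := seqDist α
  dist_self x := seqDist_self α x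
  dist_comm x y := by
    show seqDist α x y = seqDist α y x
    rcases eq_or_ne x y with h | h
    · rw [h]
    · rw [seqDist_of_ne α h, seqDist_of_ne α h.symm, seqV_comm]
  dist_triangle x y z := by
    show seqDist α x z ≤ seqDist α x y + seqDist α y z
    rcases eq_or_ne x z with hxz | hxz
    · rw [hxz, seqDist_self]
      exact add_nonneg (seqDist_nonneg hα.1 _ _) (seqDist_nonneg hα.1 _ _)
    rcases eq_or_ne x y with hxy | hxy
    · subst hxy
      rw [seqDist_self, zero_add]
    rcases eq_or_ne y z with hyz | hyz
    · subst hyz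
      rw [seqDist_self, add_zero]
    rw [seqDist_of_ne α hxz, seqDist_of_ne α hxy, seqDist_of_ne α hyz]
    have h1 : α (seqV x z) ≤ α (min (seqV x y) (seqV y z)) :=
      hα.2.1 _ _ (min_seqV_le hxz)
    rcases min_cases (seqV x y) (seqV y z) with ⟨he, _⟩ | ⟨he, _⟩
    · rw [he] at h1
      exact h1.trans (le_add_of_nonneg_right (hα.1 _).le)
    · rw [he] at h1
      exact h1.trans (le_add_of_nonneg_left (hα.1 _).le)
  eq_of_dist_eq_zero := by
    intro x y h
    by_contra hne
    have h' : seqDist α x y = 0 := h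
    rw [seqDist_of_ne α hne] at h'
    exact absurd h' (ne_of_gt (hα.1 _))

/-- The Assouad dimension of a metric space. -/
def assouadDim (X : Type*) [MetricSpace X] : ℝ≥0∞ :=
  sInf {d : ℝ≥0∞ | ∃ s : ℝ, 0 < s ∧ d = ENNReal.ofReal s ∧ ∃ K : ℝ, 0 < K ∧
    ∀ ε : ℝ, 0 < ε → ε < 2 → ∀ r : ℝ, 0 < r → ∀ x : X,
      ∃ c : Finset X, (c.card : ℝ) ≤ K * ε ^ (-s) ∧
        Metric.closedBall x r ⊆ ⋃ y ∈ c, Metric.closedBall y (ε * r)}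

/-- The Hausdorff dimension of (the whole of) a metric space. -/
def hausdorffDim (X : Type*) [MetricSpace X] : ℝ≥0∞ := dimH (Set.univ : Set X)

/-- The topology induced by a metric. -/
def metricTopology {X : Type*} (m : MetricSpace X) : TopologicalSpace X :=
  m.toPseudoMetricSpace.toUniformSpace.toTopologicalSpace

/-- `f : X → Y` is quasi-symmetric: for some self-homeomorphism `η` of `[0,∞)`,
`d(f x, f y)/d(f x, f z) ≤ η (d(x,y)/d(x,z))` for all distinct `x, y, z`. -/
def IsQuasiSymmetric {X Y : Type*} [MetricSpace X] [MetricSpace Y] (f : X → Y) : Prop :=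
  ∃ η : Homeomorph (Set.Ici (0 : ℝ)) (Set.Ici (0 : ℝ)),
    ∀ x y z : X, x ≠ y → x ≠ z → y ≠ z →
      dist (f x) (f y) / dist (f x) (f z) ≤
        (η ⟨dist x y / dist x z, div_nonneg dist_nonneg dist_nonneg⟩ : ℝ)

/-- Two metric spaces (given by explicit metric structures) are quasi-symmetrically
equivalent if there is a quasi-symmetric homeomorphism between them. -/
def QSEquiv (X Y : Type*) (mX : MetricSpace X) (mY : MetricSpace Y) : Prop :=
  ∃ f : @Homeomorph X Y (metricTopology mX) (metricTopology mY),
    @IsQuasiSymmetric X Y mX mY f.toEquiv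


/-- The `ℓ^∞`-product metric (the sup metric) on `X × Y`. -/
def prodMetric {X Y : Type*} (mX : MetricSpace X) (mY : MetricSpace Y) :
    MetricSpace (X × Y) :=
  letI := mX; letI := mY; Prod.metricSpaceMax

namespace Aux14

abbrev B := ℕ → Bool
abbrev T := B × B × B

def z : B := fun _ => false
def e (n : ℕ) : B := fun i => decide (i = n)
def chi (s : Finset ℕ) : B := fun i => decide (i ∈ s)

/-- agreement on the first `N` coordinates -/
def agr (N : ℕ) (p q : T) : Prop :=
  ∀ i < N, q.1 i = p.1 i ∧ q.2.1 i = p.2.1 i ∧ q.2.2 i = p.2.2 i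

/-- explicit description of the `k`-th derived set -/
def A (S : Set ℕ) (k : ℕ) (p : T) : Prop :=
  p.1 = z ∨ ∃ n, p.1 = e n ∧ ((p.2.1 = z ∧ n ∈ S) ∨
    (p.2.2 = z ∧ ∀ t : Finset ℕ, (∀ i ∈ t, p.2.1 i = true) → t.card + k ≤ n + 1))

def cl (S : Set ℕ) (k : ℕ) (p : T) : Prop :=
  ∀ N, ∃ q, agr N p q ∧ A S k q ∧ ¬ A S (k + 1) q

lemma e_inj {m n : ℕ} (h : e m = e n) : m = n := by
  have := congrFun h m
  simpa [e] using this

lemma e_ne_z (n : ℕ) : e n ≠ z := by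
  intro h
  have := congrFun h n
  simp [e, z] at this

lemma eq_e_of_true {S k} {q : T} {n : ℕ} (h : A S k q) (hn : q.1 n = true) :
    q.1 = e n ∧ ((q.2.1 = z ∧ n ∈ S) ∨
    (q.2.2 = z ∧ ∀ t : Finset ℕ, (∀ i ∈ t, q.2.1 i = true) → t.card + k ≤ n + 1)) := by
  rcases h with h | ⟨m, h, h'⟩
  · rw [h] at hn; simp [z] at hn
  · have : n = m := by rw [h] at hn; simpa [e] using hn
    subst this
    exact ⟨h, h'⟩

lemma exists_true {x : B} (h : x ≠ z) : ∃ i, x i = true := by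
  by_contra hc
  push Not at hc
  exact h (funext fun i => by simpa [z] using hc i)

lemma A_mono {S k} {p : T} (h : A S (k + 1) p) : A S k p := by
  rcases h with h | ⟨m, h, h' | ⟨h1, h2⟩⟩
  · exact Or.inl h
  · exact Or.inr ⟨m, h, Or.inl h'⟩
  · exact Or.inr ⟨m, h, Or.inr ⟨h1, fun t ht => by have := h2 t ht; omega⟩⟩

lemma A_zero {S k} {p : T} (h : A S k p) : A S 0 p := by
  induction k with
  | zero => exact h
  | succ k ih => exact ih (A_mono h)

lemma qpt (S : Set ℕ) {k m : ℕ} {s : Finset ℕ} (hs : s.Nonempty) (h : s.card + k = m + 1) :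
    A S k (e m, chi s, z) ∧ ¬ A S (k + 1) (e m, chi s, z) := by
  constructor
  · refine Or.inr ⟨m, rfl, Or.inr ⟨rfl, fun t ht => ?_⟩⟩
    have : t ⊆ s := fun i hi => by simpa [chi] using ht i hi
    have := Finset.card_le_card this
    omega
  · rintro (h1 | ⟨n, h1, ⟨h2, -⟩ | ⟨-, h2⟩⟩)
    · exact e_ne_z m h1
    · obtain ⟨i, hi⟩ := hs
      have := congrFun h2 i
      simp [chi, z, hi] at this
    · have := e_inj h1
      subst this
      have := h2 s (fun i hi => by simp [chi, hi])
      omega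

lemma exists_chi {x : B} {c : ℕ} (h : ∀ t : Finset ℕ, (∀ i ∈ t, x i = true) → t.card ≤ c) :
    ∃ u : Finset ℕ, x = chi u := by
  have hf : {i | x i = true}.Finite := by
    by_contra hi
    obtain ⟨t, ht, hc⟩ := Set.Infinite.exists_subset_card_eq hi (c + 1)
    have := h t (fun i hi => ht hi)
    omega
  refine ⟨hf.toFinset, ?_⟩
  funext i
  simp [chi]

lemma cl_a (S : Set ℕ) (k : ℕ) (x : B) : cl S k (z, x, z) := by
  intro N
  set s : Finset ℕ := (Finset.range N).filter (fun i => x i = true) ∪ Finset.Ico N (2 * N + 1) with hs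
  have hc : N + 1 ≤ s.card := by
    have : (Finset.Ico N (2 * N + 1)).card ≤ s.card := Finset.card_le_card Finset.subset_union_right
    rw [Nat.card_Ico] at this
    omega
  have := qpt S (k := k) (m := s.card + k - 1) (s := s) (Finset.card_pos.1 (by omega)) (by omega)
  refine ⟨_, ?_, this⟩
  intro i hi
  refine ⟨?_, ?_, rfl⟩
  · simp only [e, z, decide_eq_false_iff_not]; omega
  · have : i ∈ s ↔ x i = true := by
      simp [hs, hi]
    simp only [chi, this]
    simp

lemma cl_b (S : Set ℕ) {k n : ℕ} {x : B}
    (h : ∀ t : Finset ℕ, (∀ i ∈ t, x i = true) → t.card + (k + 1) ≤ n + 1) :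
    cl S k (e n, x, z) := by
  intro N
  obtain ⟨u, rfl⟩ := exists_chi (x := x) (c := n + 1) (fun t ht => by have := h t ht; omega)
  have hu := h u (fun i hi => by simp [chi, hi])
  set M := max N (u.sup id + 1) with hM
  have hd : Disjoint u (Finset.Ico M (M + (n + 1 - k - u.card))) := by
    rw [Finset.disjoint_left]
    intro i hi hi'
    have h1 : i ≤ u.sup id := Finset.le_sup (f := id) hi
    have h2 := (Finset.mem_Ico.1 hi').1
    omega
  have hc := Finset.card_union_of_disjoint hd
  rw [Nat.card_Ico] at hc
  have := qpt S (k := k) (m := n) (s := u ∪ (Finset.Ico M (M + (n + 1 - k - u.card))))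
    (Finset.card_pos.1 (by omega)) (by omega)
  refine ⟨_, ?_, this⟩
  intro i hi
  refine ⟨rfl, ?_, rfl⟩
  have : ¬ M ≤ i := by omega
  simp [chi, this]

lemma cl_c {S : Set ℕ} {k n : ℕ} (hn : n ∈ S) (h : cl S k (e n, z, z)) : k + 1 ≤ n + 1 := by
  obtain ⟨q, h1, h2, h3⟩ := h (n + 1)
  have hq : q.1 n = true := by rw [(h1 n (by omega)).1]; simp [e]
  obtain ⟨h4, h5 | ⟨h5, h6⟩⟩ := eq_e_of_true h2 hq
  · exact absurd (Or.inr ⟨n, h4, Or.inl h5⟩) h3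
  · by_contra hk
    apply h3
    refine Or.inr ⟨n, h4, Or.inl ⟨?_, hn⟩⟩
    by_contra hx
    obtain ⟨i, hi⟩ := exists_true hx
    have := h6 {i} (by simpa using hi)
    simp at this
    omega

lemma cl_d {S : Set ℕ} {k : ℕ} {p : T} (h : cl S k p) : p.2.2 = z := by
  by_contra hy
  obtain ⟨i, hi⟩ := exists_true hy
  obtain ⟨q, h1, h2, h3⟩ := h (i + 1)
  have hq := (h1 i (by omega)).2.2
  rw [hi] at hq
  apply h3
  rcases h2 with h2 | ⟨n, h2, h4 | ⟨h4, -⟩⟩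
  · exact Or.inl h2
  · exact Or.inr ⟨n, h2, Or.inl h4⟩
  · rw [h4] at hq; simp [z] at hq

lemma witness (S : Set ℕ) (n : ℕ) :
    (∃ p, A S (n + 2) p ∧ cl S n p ∧ ¬ cl S (n + 1) p) ↔ n ∈ S := by
  constructor
  · rintro ⟨⟨a, x, y⟩, h1, h2, h3⟩
    have hy := cl_d h2
    simp only at hy
    subst hy
    rcases h1 with h1 | ⟨m, h1, ⟨h4, h5⟩ | ⟨-, h4⟩⟩
    · simp only at h1
      subst h1
      exact absurd (cl_a S _ _) h3
    · simp only at h1 h4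
      subst h1 h4
      have := cl_c h5 h2
      have h6 : ¬ (n + 2 ≤ m + 1) := by
        intro h6
        apply h3
        apply cl_b
        intro t ht
        have : t = ∅ := by
          by_contra hne
          obtain ⟨i, hi⟩ := Finset.nonempty_iff_ne_empty.2 hne
          simpa [z] using ht i hi
        subst this
        simp; omega
      have : n = m := by omega
      rwa [this]
    · simp only at h1 h4
      subst h1
      exact absurd (cl_b S h4) h3
  · intro hn
    refine ⟨(e n, z, z), Or.inr ⟨n, rfl, Or.inl ⟨rfl, hn⟩⟩, ?_, fun h => ?_⟩
    · apply cl_b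
      intro t ht
      have : t = ∅ := by
        by_contra hne
        obtain ⟨i, hi⟩ := Finset.nonempty_iff_ne_empty.2 hne
        simpa [z] using ht i hi
      subst this
      simp
    · have := cl_c hn h
      omega

def flip (N : ℕ) (y : B) : B := Function.update y N (!(y N))

lemma flip_ne (N : ℕ) (y : B) : flip N y ≠ y := by
  intro h
  have := congrFun h N
  simp [flip] at this

lemma flip_lt {N i : ℕ} (y : B) (h : i < N) : flip N y i = y i := by
  simp [flip, Function.update_of_ne h.ne]

lemma acc (S : Set ℕ) (k : ℕ) {p : T} (hp : A S 0 p) :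
    (∀ N, ∃ q, agr N p q ∧ q ≠ p ∧ A S k q) ↔ A S (k + 1) p := by
  obtain ⟨a, x, y⟩ := p
  constructor
  · intro h
    by_contra hc
    rcases hp with hp | ⟨n, hp, hp'⟩
    · exact hc (Or.inl hp)
    simp only at hp hp'
    subst hp
    have hc2 : ¬ (x = z ∧ n ∈ S) := fun h => hc (Or.inr ⟨n, rfl, Or.inl h⟩)
    have hy : y = z := by
      rcases hp' with h | h
      · exact absurd h hc2
      · exact h.1
    subst hy
    have : ∃ t : Finset ℕ, (∀ i ∈ t, x i = true) ∧ n + 1 < t.card + (k + 1) := by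
      by_contra hh
      push Not at hh
      exact hc (Or.inr ⟨n, rfl, Or.inr ⟨rfl, hh⟩⟩)
    obtain ⟨t, ht, htc⟩ := this
    have : ∃ M, x ≠ chi t → ∃ j, j < M ∧ x j = true ∧ j ∉ t := by
      by_cases hx : x = chi t
      · exact ⟨0, fun h => absurd hx h⟩
      · have : ∃ j, x j = true ∧ j ∉ t := by
          by_contra hh
          push Not at hh
          apply hx
          funext i
          by_cases hi : i ∈ t
          · simp [chi, hi, ht i hi]
          · have : ¬ x i = true := fun h => hi (hh i h)
            simpa [chi, hi] using this
        obtain ⟨j, hj⟩ := this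
        exact ⟨j + 1, fun _ => ⟨j, by omega, hj⟩⟩
    obtain ⟨M, hM⟩ := this
    obtain ⟨q, h1, h2, h3⟩ := h (max (n + 1) (max M (t.sup id + 1)))
    have hq : q.1 n = true := by rw [(h1 n (by omega)).1]; simp [e]
    have htq : ∀ i ∈ t, q.2.1 i = true := by
      intro i hi
      have h5 : i ≤ t.sup id := Finset.le_sup (f := id) hi
      rw [(h1 i (by omega)).2.1]
      exact ht i hi
    obtain ⟨h4, ⟨h5, h6⟩ | ⟨h5, h6⟩⟩ := eq_e_of_true h3 hq
    · have hte : t = ∅ := by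
        by_contra hne
        obtain ⟨i, hi⟩ := Finset.nonempty_iff_ne_empty.2 hne
        have := htq i hi
        rw [h5] at this
        simp [z] at this
      subst hte
      by_cases hx : x = chi ∅
      · exact hc2 ⟨by rw [hx]; funext i; simp [chi, z], h6⟩
      · obtain ⟨j, hj, hxj, -⟩ := hM hx
        have := (h1 j (by omega)).2.1
        rw [h5] at this
        simp only at this
        rw [hxj] at this
        simp [z] at this
    · have ht1 := h6 t htq
      have key : ∀ j, q.2.1 j = true → j ∈ t := by
        intro j hj
        by_contra hjt
        have := h6 (insert j t) (by
          intro i hi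
          rcases Finset.mem_insert.1 hi with rfl | hi
          · exact hj
          · exact htq i hi)
        rw [Finset.card_insert_of_notMem hjt] at this
        omega
      have hqx : q.2.1 = chi t := by
        funext i
        by_cases hi : i ∈ t
        · simp [chi, hi, htq i hi]
        · have : ¬ q.2.1 i = true := fun h => hi (key i h)
          simpa [chi, hi] using this
      by_cases hx : x = chi t
      · apply h2
        rw [hx, ← hqx, ← h4, ← h5]
      · obtain ⟨j, hj, hxj, hjt⟩ := hM hx
        apply hjt
        apply key
        rw [(h1 j (by omega)).2.1]
        exact hxj
  · rintro h N
    have h0 := h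
    rcases h with h | ⟨n, h, ⟨h1, h2⟩ | ⟨h1, h2⟩⟩
    · refine ⟨(a, x, flip N y), fun i hi => ⟨rfl, rfl, flip_lt y hi⟩, ?_, Or.inl h⟩
      intro hh
      simp only [Prod.mk.injEq] at hh
      exact flip_ne N y hh.2.2
    · refine ⟨(a, x, flip N y), fun i hi => ⟨rfl, rfl, flip_lt y hi⟩, ?_,
        Or.inr ⟨n, h, Or.inl ⟨h1, h2⟩⟩⟩
      intro hh
      simp only [Prod.mk.injEq] at hh
      exact flip_ne N y hh.2.2
    · simp only at h h1 h2
      subst h h1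
      obtain ⟨q, h3, h4, h5⟩ := cl_b S h2 N
      exact ⟨q, h3, fun hh => h5 (hh ▸ h0), h4⟩

/-! ### topology -/

lemma open_basis1 {U : Set B} (hU : IsOpen U) {a : B} (ha : a ∈ U) :
    ∃ N, ∀ b : B, (∀ i < N, b i = a i) → b ∈ U := by
  obtain ⟨I, u, h1, h2⟩ := isOpen_pi_iff.1 hU a ha
  refine ⟨I.sup id + 1, fun b hb => h2 ?_⟩
  intro i hi
  have h5 : i ≤ I.sup id := Finset.le_sup (f := id) hi
  rw [hb i (by omega)]
  exact (h1 i hi).2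

lemma open_basis {U : Set T} (hU : IsOpen U) {p : T} (hp : p ∈ U) :
    ∃ N, ∀ q : T, agr N p q → q ∈ U := by
  obtain ⟨u, v, hu, hv, h1, h2, h3⟩ := isOpen_prod_iff.1 hU p.1 p.2 hp
  obtain ⟨v', w, hv', hw, h4, h5, h6⟩ := isOpen_prod_iff.1 hv p.2.1 p.2.2 h2
  obtain ⟨N1, hN1⟩ := open_basis1 hu h1
  obtain ⟨N2, hN2⟩ := open_basis1 hv' h4
  obtain ⟨N3, hN3⟩ := open_basis1 hw h5
  refine ⟨max N1 (max N2 N3), fun q hq => h3 ⟨hN1 _ fun i hi => (hq i (by omega)).1, h6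
    ⟨hN2 _ fun i hi => (hq i (by omega)).2.1, hN3 _ fun i hi => (hq i (by omega)).2.2⟩⟩⟩

lemma isOpen_agr (N : ℕ) (p : T) : IsOpen {q | agr N p q} := by
  have : {q | agr N p q} = ⋂ i ∈ Finset.range N, {q : T | q.1 i = p.1 i ∧ q.2.1 i = p.2.1 i ∧ q.2.2 i = p.2.2 i} := by
    ext q; simp [agr]
  rw [this]
  apply isOpen_biInter_finset
  intro i _
  have h1 : Continuous fun q : T => (q.1 i, q.2.1 i, q.2.2 i) := by fun_prop
  have := (isOpen_discrete {(p.1 i, p.2.1 i, p.2.2 i)}).preimage h1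
  convert this using 1
  ext q
  simp

lemma mem_closure_agr {C : Set T} {p : T} :
    p ∈ closure C ↔ ∀ N, ∃ q, agr N p q ∧ q ∈ C := by
  rw [_root_.mem_closure_iff]
  constructor
  · intro h N
    exact h _ (isOpen_agr N p) (fun i _ => ⟨rfl, rfl, rfl⟩)
  · intro h U hU hp
    obtain ⟨N, hN⟩ := open_basis hU hp
    obtain ⟨q, h1, h2⟩ := h N
    exact ⟨q, hN q h1, h2⟩

def K (S : Set ℕ) : Set T := {p | A S 0 p}

lemma K_closed (S : Set ℕ) : IsClosed (K S) := by
  rw [← closure_subset_iff_isClosed]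
  intro p hp
  rw [mem_closure_agr] at hp
  by_contra hc
  have hz : p.1 ≠ z := fun h => hc (Or.inl h)
  obtain ⟨n, hn⟩ := exists_true hz
  have he : p.1 = e n := by
    funext j
    obtain ⟨q, h1, h2⟩ := hp (max (n + 1) (j + 1))
    rw [← (h1 j (by omega)).1]
    rw [(eq_e_of_true h2 (by rw [(h1 n (by omega)).1, hn])).1]
  have c1 : ∃ N, ∀ q, agr N p q → ¬ (q.2.1 = z ∧ n ∈ S) := by
    by_cases hx : p.2.1 = z
    · exact ⟨0, fun q _ h => hc (Or.inr ⟨n, he, Or.inl ⟨hx, h.2⟩⟩)⟩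
    · obtain ⟨i, hi⟩ := exists_true hx
      refine ⟨i + 1, fun q hq h => ?_⟩
      have := (hq i (by omega)).2.1
      rw [h.1, hi] at this
      simp [z] at this
  have c2 : ∃ N, ∀ q, agr N p q → ¬ (q.2.2 = z ∧
      ∀ t : Finset ℕ, (∀ i ∈ t, q.2.1 i = true) → t.card + 0 ≤ n + 1) := by
    by_cases hx : p.2.2 = z
    · have : ∃ t : Finset ℕ, (∀ i ∈ t, p.2.1 i = true) ∧ n + 1 < t.card + 0 := by
        by_contra hh
        push Not at hh
        exact hc (Or.inr ⟨n, he, Or.inr ⟨hx, hh⟩⟩)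
      obtain ⟨t, h1, h2⟩ := this
      refine ⟨t.sup id + 1, fun q hq h => ?_⟩
      have := h.2 t (fun i hi => by
        have h5 : i ≤ t.sup id := Finset.le_sup (f := id) hi
        rw [(hq i (by omega)).2.1]
        exact h1 i hi)
      omega
    · obtain ⟨i, hi⟩ := exists_true hx
      refine ⟨i + 1, fun q hq h => ?_⟩
      have := (hq i (by omega)).2.2
      rw [h.1, hi] at this
      simp [z] at this
  obtain ⟨N1, c1⟩ := c1
  obtain ⟨N2, c2⟩ := c2
  obtain ⟨q, h1, h2⟩ := hp (max (n + 1) (max N1 N2))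
  rcases (eq_e_of_true h2 (by rw [(h1 n (by omega)).1, hn])).2 with h | h
  · exact c1 q (fun i hi => h1 i (by omega)) h
  · exact c2 q (fun i hi => h1 i (by omega)) h

/-- iterated derived sets -/
def D (X : Type*) [TopologicalSpace X] : ℕ → Set X
  | 0 => Set.univ
  | k + 1 => {p | p ∈ closure (D X k \ {p})}

/-- the homeomorphism invariant -/
def Wit (X : Type*) [TopologicalSpace X] (n : ℕ) : Prop :=
  ∃ p : X, p ∈ D X (n + 2) ∧ p ∈ closure (D X n \ D X (n + 1)) ∧
    p ∉ closure (D X (n + 1) \ D X (n + 2))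

lemma D_homeo {X Y : Type*} [TopologicalSpace X] [TopologicalSpace Y] (h : X ≃ₜ Y) (k : ℕ) :
    h ⁻¹' (D Y k) = D X k := by
  induction k with
  | zero => rfl
  | succ k ih =>
    ext p
    have : p ∈ h ⁻¹' (closure (D Y k \ {h p})) ↔ p ∈ closure (D X k \ {p}) := by
      rw [h.preimage_closure, Set.preimage_sdiff, ih]
      have : h ⁻¹' {h p} = {p} := by ext; simp
      rw [this]
    exact this

lemma Wit_homeo {X Y : Type*} [TopologicalSpace X] [TopologicalSpace Y] (h : X ≃ₜ Y) {n : ℕ}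
    (hX : Wit X n) : Wit Y n := by
  obtain ⟨p, h1, h2, h3⟩ := hX
  refine ⟨h p, ?_, ?_, ?_⟩
  · rw [← D_homeo h] at h1; exact h1
  · rw [← D_homeo h, ← D_homeo h, ← Set.preimage_sdiff, ← h.preimage_closure] at h2; exact h2
  · rw [← D_homeo h, ← D_homeo h, ← Set.preimage_sdiff, ← h.preimage_closure] at h3; exact h3

lemma D_K (S : Set ℕ) (k : ℕ) (p : K S) : p ∈ D (K S) k ↔ A S k p.1 := by
  induction k generalizing p with
  | zero => exact ⟨fun _ => p.2, fun _ => Set.mem_univ _⟩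
  | succ k ih =>
    rw [← acc S k p.2]
    change p ∈ closure (D (K S) k \ {p}) ↔ _
    rw [closure_subtype, mem_closure_agr]
    refine forall_congr' fun N => exists_congr fun q => and_congr_right fun _ => ?_
    constructor
    · rintro ⟨q, ⟨h1, h2⟩, rfl⟩
      exact ⟨fun h => h2 (Subtype.ext h), (ih q).1 h1⟩
    · rintro ⟨h1, h2⟩
      exact ⟨⟨q, A_zero h2⟩, ⟨(ih _).2 h2, fun h => h1 (congrArg Subtype.val h)⟩, rfl⟩

lemma cl_K (S : Set ℕ) (k : ℕ) (p : K S) :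
    p ∈ closure (D (K S) k \ D (K S) (k + 1)) ↔ cl S k p.1 := by
  rw [closure_subtype, mem_closure_agr]
  refine forall_congr' fun N => exists_congr fun q => and_congr_right fun _ => ?_
  constructor
  · rintro ⟨q, ⟨h1, h2⟩, rfl⟩
    exact ⟨(D_K S _ q).1 h1, fun h => h2 ((D_K S _ q).2 h)⟩
  · rintro ⟨h1, h2⟩
    exact ⟨⟨q, A_zero h1⟩, ⟨(D_K S _ _).2 h1, fun h => h2 ((D_K S _ _).1 h)⟩, rfl⟩

lemma Wit_K (S : Set ℕ) (n : ℕ) : Wit (K S) n ↔ n ∈ S := by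
  rw [← witness S n]
  constructor
  · rintro ⟨p, h1, h2, h3⟩
    exact ⟨p.1, (D_K S _ p).1 h1, (cl_K S _ p).1 h2, fun h => h3 ((cl_K S _ p).2 h)⟩
  · rintro ⟨p, h1, h2, h3⟩
    exact ⟨⟨p, A_zero h1⟩, (D_K S _ _).2 h1, (cl_K S _ _).2 h2, fun h => h3 ((cl_K S _ _).1 h)⟩

def emb (p : T) : B := fun n =>
  if n % 3 = 0 then p.1 (n / 3) else if n % 3 = 1 then p.2.1 (n / 3) else p.2.2 (n / 3)

lemma emb_continuous : Continuous emb := by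
  refine continuous_pi fun n => ?_
  unfold emb
  split_ifs <;> fun_prop

lemma emb_injective : Function.Injective emb := by
  intro p q h
  refine Prod.ext (funext fun i => ?_) (Prod.ext (funext fun i => ?_) (funext fun i => ?_))
  · have := congrFun h (3 * i)
    simpa [emb] using this
  · have := congrFun h (3 * i + 1)
    have h1 : (3 * i + 1) % 3 = 1 := by omega
    have h2 : (3 * i + 1) / 3 = i := by omega
    simpa [emb, h1, h2] using this
  · have := congrFun h (3 * i + 2)
    have h1 : (3 * i + 2) % 3 = 2 := by omega
    have h2 : (3 * i + 2) / 3 = i := by omega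
    simpa [emb, h1, h2] using this

end Aux14

theorem statement_14 (X : Type*) [TopologicalSpace X] [PolishSpace X] [Uncountable X] :
    Cardinal.mk (Quot fun (A B : {s : Set X // IsClosed s}) =>
      Nonempty (↥A.1 ≃ₜ ↥B.1)) = Cardinal.continuum := by
  apply le_antisymm
  · refine Cardinal.mk_quot_le.trans ?_
    have hb := TopologicalSpace.isBasis_countableBasis X
    have hc := TopologicalSpace.countable_countableBasis X
    have hinj : Function.Injective (fun s : {s : Set X // IsClosed s} =>
        {u : TopologicalSpace.countableBasis X | u.1 ⊆ s.1ᶜ}) := by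
      intro s t h
      have key : ∀ s : {s : Set X // IsClosed s},
          s.1ᶜ = ⋃₀ {u ∈ TopologicalSpace.countableBasis X | u ⊆ s.1ᶜ} :=
        fun s => hb.open_eq_sUnion' s.2.isOpen_compl
      apply Subtype.ext
      apply compl_injective
      rw [key s, key t]
      congr 1
      ext u
      simp only [Set.mem_ofPred_eq]
      refine and_congr_right fun hu => ?_
      have := Set.ext_iff.1 h ⟨u, hu⟩
      simpa only [Set.mem_ofPred_eq] using this
    refine (Cardinal.mk_le_of_injective hinj).trans ?_
    rw [Cardinal.mk_set, ← Cardinal.two_power_aleph0]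
    exact Cardinal.power_le_power_left two_ne_zero (Cardinal.mk_le_aleph0_iff.2 hc.to_subtype)
  · obtain ⟨f, -, hf, hfi⟩ := (isClosed_univ (X := X)).exists_nat_bool_injection_of_not_countable
      (Set.not_countable_univ)
    have hg : Topology.IsClosedEmbedding (f ∘ Aux14.emb) :=
      (hf.comp Aux14.emb_continuous).isClosedEmbedding (hfi.comp Aux14.emb_injective)
    let C : Set ℕ → {s : Set X // IsClosed s} := fun S =>
      ⟨(f ∘ Aux14.emb) '' Aux14.K S, hg.isClosedMap _ (Aux14.K_closed S)⟩
    have hC : ∀ S, Nonempty (Aux14.K S ≃ₜ (C S).1) := fun S =>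
      ⟨hg.isEmbedding.homeomorphImage (Aux14.K S)⟩
    let r : {s : Set X // IsClosed s} → {s : Set X // IsClosed s} → Prop :=
      fun A B => Nonempty (↥A.1 ≃ₜ ↥B.1)
    have hr : Equivalence r := ⟨fun A => ⟨Homeomorph.refl _⟩, fun ⟨h⟩ => ⟨h.symm⟩,
      fun ⟨h⟩ ⟨h'⟩ => ⟨h.trans h'⟩⟩
    have hinj : Function.Injective (fun S : Set ℕ => Quot.mk r (C S)) := by
      intro S S' h
      have h1 : r (C S) (C S') := by
        have := Quot.eqvGen_exact h
        rwa [hr.eqvGen_iff] at this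
      obtain ⟨h1⟩ := h1
      obtain ⟨h2⟩ := hC S
      obtain ⟨h3⟩ := hC S'
      have h4 := (h2.trans h1).trans h3.symm
      ext n
      rw [← Aux14.Wit_K, ← Aux14.Wit_K]
      exact ⟨Aux14.Wit_homeo h4, Aux14.Wit_homeo h4.symm⟩
    have := Cardinal.mk_le_of_injective (hinj.comp ULift.down_injective)
    refine le_trans (le_of_eq ?_) this
    simp

end
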